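/- Let A and B be two nonzero 0,1-matrices. Then R_B(A ⊗ B) ≥ μ(A) · R_B(B), where μ(A) is the number of 1-entries of A divided by the largest number of 1-entries in a monochromatic combinatorial rectangle of ones of A. -/

import Mathlib

/-!
Double counting. Fix a minimal cover of `A ⊗ B` by rank-1 matrices and say that a member of the
cover meets a 1-entry `(a, b)` of `A` if it has a 1 in the block `(a, b)`. The members meeting
`(a, b)`, restricted to that block, cover `B`, so each 1-entry of `A` is met by at least `R_B(B)`
members (`RB_le_card`). Conversely, the blocks met by one member form a combinatorial rectangle of
ones of `A` (the projection of the member), so each member meets at most `maxRect A` of the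
1-entries (`ones_le_maxRect`). Counting the incidences in both ways gives
`ones A * R_B(B) ≤ R_B(A ⊗ B) * maxRect A`.
-/

/-- A collection of `s` Boolean matrices covers `A` if `A` has a 1 exactly where some
matrix of the collection has a 1. -/
def BCovers {α β : Type*} {s : ℕ} (M : Fin s → Matrix α β Bool) (A : Matrix α β Bool) : Prop :=
  ∀ i j, A i j = true ↔ ∃ t, M t i j = true

/-- A nonzero Boolean matrix whose 1-entries form a combinatorial rectangle. -/
def IsRank1 {α β : Type*} (M : Matrix α β Bool) : Prop :=
  (∃ i j, M i j = true) ∧ ∃ u : α → Bool, ∃ v : β → Bool, ∀ i j, M i j = (u i && v j)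

/-- The Boolean rank of a 0,1-matrix: the smallest `s` such that `A` is the entrywise
Boolean sum (OR) of `s` matrices of Boolean rank 1. -/
noncomputable def RB {α β : Type*} (A : Matrix α β Bool) : ℕ :=
  sInf {s | ∃ M : Fin s → Matrix α β Bool, (∀ t, IsRank1 (M t)) ∧ BCovers M A}

/-- The Kronecker product of Boolean matrices. -/
def bkron {α β γ δ : Type*} (A : Matrix α β Bool) (B : Matrix γ δ Bool) :
    Matrix (α × γ) (β × δ) Bool :=
  fun i j => A i.1 j.1 && B i.2 j.2

/-- The n × n matrix with zeros on the diagonal and ones everywhere else. -/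
def Cmat (n : ℕ) : Matrix (Fin n) (Fin n) Bool := fun i j => decide (i ≠ j)

/-- σ(n): the smallest k with n ≤ binom(k, ⌈k/2⌉). -/
noncomputable def sigmaFn (n : ℕ) : ℕ := sInf {k | n ≤ Nat.choose k ((k + 1) / 2)}

/-- (a₁,a₂,a₃)-coverability: three matrices of the given Boolean ranks, every two of
which cover `A`. -/
def Coverable3 {α β : Type*} (A : Matrix α β Bool) (a1 a2 a3 : ℕ) : Prop :=
  ∃ A1 A2 A3 : Matrix α β Bool,
    RB A1 ≤ a1 ∧ RB A2 ≤ a2 ∧ RB A3 ≤ a3 ∧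
    (∀ i j, A i j = true ↔ (A1 i j = true ∨ A2 i j = true)) ∧
    (∀ i j, A i j = true ↔ (A1 i j = true ∨ A3 i j = true)) ∧
    (∀ i j, A i j = true ↔ (A2 i j = true ∨ A3 i j = true))

/-- The number of 1-entries of a Boolean matrix. -/
def ones {α β : Type*} [Fintype α] [Fintype β] (A : Matrix α β Bool) : ℕ :=
  (Finset.univ.filter (fun p : α × β => A p.1 p.2 = true)).card

/-- The largest number of 1-entries in a monochromatic rectangle of ones of `A`. -/
noncomputable def maxRect {α β : Type*} [Fintype α] [Fintype β] (A : Matrix α β Bool) : ℕ :=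
  sSup {c | ∃ M : Matrix α β Bool,
    IsRank1 M ∧ (∀ i j, M i j = true → A i j = true) ∧ c = ones M}

/-- A cover by rank-1 matrices over any finite index type bounds the Boolean rank. -/
lemma RB_le_card {α β ι : Type*} [Fintype ι] (A : Matrix α β Bool) (M : ι → Matrix α β Bool)
    (h1 : ∀ t, IsRank1 (M t)) (hc : ∀ i j, A i j = true ↔ ∃ t, M t i j = true) :
    RB A ≤ Fintype.card ι := by
  refine Nat.sInf_le ⟨fun t => M ((Fintype.equivFin ι).symm t), fun t => h1 _, fun i j => ?_⟩
  rw [hc i j]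
  exact ((Fintype.equivFin ι).symm.surjective.exists (p := fun t => M t i j = true))

/-- The infimum in `RB` is attained: the matrix units at the 1-entries form a cover, so the set
of sizes of covers is nonempty. -/
lemma exists_cover_RB {α β : Type*} [Fintype α] [Fintype β] (A : Matrix α β Bool) :
    ∃ M : Fin (RB A) → Matrix α β Bool, (∀ t, IsRank1 (M t)) ∧ BCovers M A := by
  classical
  refine Nat.sInf_mem (s := {s | ∃ M : Fin s → Matrix α β Bool,
    (∀ t, IsRank1 (M t)) ∧ BCovers M A}) ?_
  let e := Fintype.equivFin {p : α × β // A p.1 p.2 = true}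
  refine ⟨_, fun t i j => decide (i = (e.symm t).1.1) && decide (j = (e.symm t).1.2),
    fun t => ⟨⟨(e.symm t).1.1, (e.symm t).1.2, by simp⟩, _, _, fun _ _ => rfl⟩, fun i j => ?_⟩
  constructor
  · intro h
    exact ⟨e ⟨(i, j), h⟩, by simp⟩
  · rintro ⟨t, ht⟩
    simp only [Bool.and_eq_true, decide_eq_true_eq] at ht
    rw [ht.1, ht.2]
    exact (e.symm t).2

/-- The set of sizes of rectangles of ones is bounded, so the supremum in `maxRect` is a genuine
maximum. -/
lemma ones_le_maxRect {α β : Type*} [Fintype α] [Fintype β] (A M : Matrix α β Bool)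
    (h1 : IsRank1 M) (h : ∀ i j, M i j = true → A i j = true) : ones M ≤ maxRect A := by
  refine le_csSup ⟨Fintype.card (α × β), ?_⟩ ⟨M, h1, h, rfl⟩
  rintro c ⟨N, -, -, rfl⟩
  exact Finset.card_le_univ _

theorem rank_kronecker_lower_bound {n m p q : ℕ}
    (A : Matrix (Fin n) (Fin m) Bool) (B : Matrix (Fin p) (Fin q) Bool)
    (hA : ∃ i j, A i j = true) (hB : ∃ i j, B i j = true) :
    (ones A : ℚ) / (maxRect A : ℚ) * (RB B : ℚ) ≤ (RB (bkron A B) : ℚ) := by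
  classical
  obtain ⟨M, hM1, hMc⟩ := exists_cover_RB (bkron A B)
  have key : ones A * RB B ≤ RB (bkron A B) * maxRect A := by
    have := Finset.card_mul_le_card_mul
      (s := Finset.univ.filter (fun x : Fin n × Fin m => A x.1 x.2 = true))
      (t := (Finset.univ : Finset (Fin (RB (bkron A B)))))
      (fun x t => ∃ c d, M t (x.1, c) (x.2, d) = true) (m := RB B) (n := maxRect A) ?_ ?_
    · simpa [ones] using this
    · rintro ⟨a, b⟩ hab
      replace hab : A a b = true := by simpa using hab
      have h := RB_le_card (ι := {t // ∃ c d, M t (a, c) (b, d) = true}) B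
        (fun t c d => M t.1 (a, c) (b, d)) ?_ ?_
      · simpa [Finset.bipartiteAbove, Fintype.card_subtype] using h
      · rintro ⟨t, ht⟩
        obtain ⟨-, u, v, huv⟩ := hM1 t
        exact ⟨ht, fun c => u (a, c), fun d => v (b, d), fun c d => huv _ _⟩
      · intro c d
        have h := hMc (a, c) (b, d)
        simp only [bkron, hab, Bool.true_and] at h
        rw [h]
        exact ⟨fun ⟨t, ht⟩ => ⟨⟨t, c, d, ht⟩, ht⟩, fun ⟨t, ht⟩ => ⟨t.1, ht⟩⟩
    · intro t _
      obtain ⟨⟨i, j, hij⟩, u, v, huv⟩ := hM1 t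
      have hsub : ∀ a b, (∃ c d, M t (a, c) (b, d) = true) → A a b = true := by
        rintro a b ⟨c, d, h⟩
        have := (hMc (a, c) (b, d)).2 ⟨t, h⟩
        simp only [bkron, Bool.and_eq_true] at this
        exact this.1
      -- The indicator of the blocks met by `M t`.
      let N : Matrix (Fin n) (Fin m) Bool := fun a b => decide (∃ c d, M t (a, c) (b, d) = true)
      have hN : ones N ≤ maxRect A := by
        refine ones_le_maxRect A N ⟨⟨i.1, j.1, ?_⟩, fun a => decide (∃ c, u (a, c) = true),
          fun b => decide (∃ d, v (b, d) = true), fun a b => ?_⟩ fun a b h => ?_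
        · exact decide_eq_true ⟨i.2, j.2, hij⟩
        · simp only [N, huv, Bool.and_eq_true, ← Bool.decide_and, exists_and_left,
            exists_and_right]
        · exact hsub a b (of_decide_eq_true h)
      refine le_trans (Finset.card_le_card fun x hx => ?_) hN
      have hx' := (Finset.mem_filter.1 hx).2
      exact Finset.mem_filter.2 ⟨Finset.mem_univ _, decide_eq_true hx'⟩
  -- A 1-entry of `A` is a rectangle of ones, which makes the denominator nonzero.
  have hpos : 0 < maxRect A := by
    obtain ⟨a, b, hab⟩ := hA
    refine lt_of_lt_of_le ?_ (ones_le_maxRect A (fun i j => decide (i = a) && decide (j = b))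
      ⟨⟨a, b, by simp⟩, _, _, fun _ _ => rfl⟩ ?_)
    · exact Finset.card_pos.2 ⟨(a, b), by simp⟩
    · intro i j h
      simp only [Bool.and_eq_true, decide_eq_true_eq] at h
      rw [h.1, h.2, hab]
  rw [div_mul_eq_mul_div, div_le_iff₀ (by exact_mod_cast hpos)]
  exact_mod_cast key
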